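/- Let $0<p\le 1<q<\infty$, $-1<\beta\le\alpha<\infty$, $t=(\beta+2)/(\alpha+2)$, $1/q+1/q'=1$. If $\mu$ is a $(1/p+t/q')$-Carleson measure for $L^1_a(\omega_\alpha)$, then for all polynomials $f,g$, $\int_{\mathbb{D}}|f(z)g(z)|\,d\mu(z)\le C\,\|f\|_{L^p(\omega_\alpha)}\,\|g\|_{L^{q'}(\omega_\beta)}$ with $C$ independent of $f,g$. -/

import Mathlib

/-!
Write `d(z) = 1 - |z|²`, let `f`, `g` be the two polynomials, and put
`s = (a + 2)/p + (b + 2)/q'`, so that the hypothesis reads `μ(D(z,r)) ≲ d(z)^s`.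

Since `log |f|` is subharmonic, so is `|f|^p` for every `p > 0` (`submean`); averaging over the
Euclidean disk `B_z` of centre `z` and radius `(r/2)(1 - |z|)`, on which `d` is comparable to
`d(z)`, gives `|f(z)|^p d(z)^(a+2) ≲ ∫_{B_z} |f|^p ω_a dA` (`local_bound`). In particular
`|f(z)| d(z)^((a+2)/p) ≲ ‖f‖` and `|g(z)| d(z)^((b+2)/q') ≲ ‖g‖` (`pointwise_bound`), where the norms
are those of `L^p(ω_a)` and `L^{q'}(ω_b)`.

Because `p ≤ 1`, one may split `|f| = |f|^(1-p) |f|^p`, estimate the first factor and `|g|` by their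
pointwise bounds, and keep the second factor as a local integral:
`|f(z) g(z)| ≲ ‖f‖^(1-p) ‖g‖ d(z)^(-s) ∫_{B_z} |f|^p ω_a dA`.
Integrating against `μ` and applying Tonelli (`carleson_fubini`), each `w` receives the mass
`∫_{z : w ∈ B_z} d(z)^(-s) dμ(z) ≲ d(w)^(-s) μ(D(w,r)) ≲ 1`, so what remains is
`‖f‖^(1-p) ‖g‖ ‖f‖^p = ‖f‖ ‖g‖`.
-/

open MeasureTheory Metric Filter Complex Set
open scoped ENNReal NNReal Topology

/-- The normalized area measure on `ℂ`. -/
noncomputable def dA : Measure ℂ := (ENNReal.ofReal Real.pi)⁻¹ • volume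

/-- The standard weight `ω_a(z) = (1+a)(1-|z|²)^a`. -/
noncomputable def stdW (a : ℝ) (z : ℂ) : ℝ := (1 + a) * (1 - ‖z‖ ^ 2) ^ a

/-- The weighted `L^p` (quasi-)norm over the unit disk. -/
noncomputable def wnorm (p a : ℝ) (f : ℂ → ℂ) : ℝ≥0∞ :=
  (∫⁻ z in ball (0 : ℂ) 1, ENNReal.ofReal (‖f z‖ ^ p * stdW a z) ∂dA) ^ (1 / p)

/-- The pseudohyperbolic disk `D(z,r)`. -/
def pD (z : ℂ) (r : ℝ) : Set ℂ :=
  {w | w ∈ ball (0 : ℂ) 1 ∧ ‖(z - w) / (1 - (starRingEnd ℂ) z * w)‖ < r}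

/-- The Toeplitz operator `T_{μ,b}`. -/
noncomputable def Toep (μ : Measure ℂ) (b : ℝ) (f : ℂ → ℂ) (z : ℂ) : ℂ :=
  ∫ w in ball (0 : ℂ) 1, f w / (1 - z * (starRingEnd ℂ) w) ^ (((2 + b : ℝ)) : ℂ) ∂μ

/-- The Bloch norm. -/
noncomputable def blochNorm (g : ℂ → ℂ) : ℝ :=
  ‖g 0‖ + sSup ((fun z => (1 - ‖z‖ ^ 2) * ‖deriv g z‖) '' ball (0 : ℂ) 1)

/-- Membership in the Bloch space. -/
def MemBloch (g : ℂ → ℂ) : Prop :=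
  DifferentiableOn ℂ g (ball (0 : ℂ) 1) ∧
    BddAbove ((fun z => (1 - ‖z‖ ^ 2) * ‖deriv g z‖) '' ball (0 : ℂ) 1)

/-! ### Subharmonicity of `|P|^p` -/

/-- Sub-mean value inequality for `|P|^p` on the unit circle: Jensen's inequality for `exp`, applied
to the bound of `|P(0)|` by the Mahler measure of `P`. -/
lemma norm_coeff_zero_rpow_le (P : Polynomial ℂ) {p : ℝ} (hp : 0 < p) :
    ‖P.coeff 0‖ ^ p * (2 * Real.pi) ≤
      ∫ θ in (0 : ℝ)..2 * Real.pi, ‖P.eval (circleMap 0 1 θ)‖ ^ p := by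
  have hpi : (0 : ℝ) < 2 * Real.pi := by positivity
  by_cases hP : P = 0
  · simp [hP, Real.zero_rpow hp.ne']
  set I : ℝ := ∫ θ in (0 : ℝ)..2 * Real.pi, Real.log ‖P.eval (circleMap 0 1 θ)‖ with hI
  set A : ℝ := (2 * Real.pi)⁻¹ * I with hA
  have hc : ‖P.coeff 0‖ ≤ Real.exp A := by
    have h := P.norm_coeff_le_choose_mul_mahlerMeasure 0
    rw [Polynomial.mahlerMeasure_def_of_ne_zero hP] at h
    simpa only [Nat.choose_zero_right, Nat.cast_one, one_mul] using h
  have hc' : ‖P.coeff 0‖ ^ p ≤ Real.exp (p * A) := by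
    rw [mul_comm, Real.exp_mul]
    exact Real.rpow_le_rpow (norm_nonneg _) hc hp.le
  have hli := P.intervalIntegrable_mahlerMeasure
  have hcont : Continuous fun θ : ℝ => ‖P.eval (circleMap 0 1 θ)‖ ^ p := by
    refine Continuous.rpow_const ?_ (fun _ => Or.inr hp.le)
    exact (P.continuous.comp (continuous_circleMap 0 1)).norm
  -- The tangent line of `exp` at `p * A` lies below its graph; zeros of `P`, where `Real.log` takes
  -- its junk value, form a null set.
  have key : ∫ θ in (0 : ℝ)..2 * Real.pi, (Real.exp (p * A) * (1 - p * A) +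
        Real.exp (p * A) * p * Real.log ‖P.eval (circleMap 0 1 θ)‖) ≤
      ∫ θ in (0 : ℝ)..2 * Real.pi, ‖P.eval (circleMap 0 1 θ)‖ ^ p := by
    refine intervalIntegral.integral_mono_ae hpi.le ?_ (hcont.intervalIntegrable _ _) ?_
    · exact (intervalIntegrable_const).add (hli.const_mul _)
    have hnull : ∀ᵐ θ : ℝ, θ ∉ circleMap 0 1 ⁻¹' {z | P.IsRoot z} :=
      measure_eq_zero_iff_ae_notMem.1 (((Polynomial.finite_setOfPred_isRoot hP).countable.preimage_circleMap 0
        one_ne_zero).measure_zero _)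
    filter_upwards [hnull] with θ hθ
    have hpos : 0 < ‖P.eval (circleMap 0 1 θ)‖ := norm_pos_iff.2 hθ
    rw [Real.rpow_def_of_pos hpos]
    set L := Real.log ‖P.eval (circleMap 0 1 θ)‖
    have h1 := Real.add_one_le_exp (L * p - p * A)
    have h2 : Real.exp (L * p) = Real.exp (p * A) * Real.exp (L * p - p * A) := by
      rw [← Real.exp_add]; ring_nf
    rw [h2]
    nlinarith [Real.exp_pos (p * A)]
  rw [intervalIntegral.integral_add intervalIntegrable_const (hli.const_mul _),
    intervalIntegral.integral_const, intervalIntegral.integral_const_mul, ← hI, smul_eq_mul] at key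
  have hIA : I = 2 * Real.pi * A := by rw [hA]; field_simp
  rw [hIA] at key
  nlinarith [mul_le_mul_of_nonneg_right hc' hpi.le]

lemma rpow_mul_le_lintegral_circle (P : Polynomial ℂ) {p : ℝ} (hp : 0 < p) :
    ENNReal.ofReal (‖P.eval 0‖ ^ p) * ENNReal.ofReal (2 * Real.pi) ≤
      ∫⁻ θ in Ioc (0 : ℝ) (2 * Real.pi), ENNReal.ofReal (‖P.eval (circleMap 0 1 θ)‖ ^ p) := by
  have hpi : (0 : ℝ) ≤ 2 * Real.pi := by positivity
  have hcont : Continuous fun θ : ℝ => ‖P.eval (circleMap 0 1 θ)‖ ^ p := by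
    refine Continuous.rpow_const ?_ (fun _ => Or.inr hp.le)
    exact (P.continuous.comp (continuous_circleMap 0 1)).norm
  rw [← ofReal_integral_eq_lintegral_ofReal
    ((intervalIntegrable_iff_integrableOn_Ioc_of_le hpi).1 (hcont.intervalIntegrable _ _))
    (ae_of_all _ fun _ => by positivity), ← ENNReal.ofReal_mul (by positivity),
    ← intervalIntegral.integral_of_le hpi, ← Polynomial.coeff_zero_eq_eval_zero]
  exact ENNReal.ofReal_le_ofReal (norm_coeff_zero_rpow_le P hp)

lemma lintegral_ball_rotate (F : ℂ → ℝ≥0∞) (R θ : ℝ) :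
    ∫⁻ z in ball (0 : ℂ) R, F (circleMap 0 1 θ * z) = ∫⁻ z in ball (0 : ℂ) R, F z := by
  let e := rotation (Circle.exp θ)
  have he : ∀ z, e z = circleMap 0 1 θ * z := by
    intro z; simp [e, rotation_apply, circleMap]
  have hpre : e ⁻¹' ball (0 : ℂ) R = ball (0 : ℂ) R := by
    ext z; simp
  have := (e.measurePreserving.restrict_preimage_emb
    e.toMeasurableEquiv.measurableEmbedding (ball (0 : ℂ) R)).lintegral_comp_emb
      e.toMeasurableEquiv.measurableEmbedding F
  rw [hpre] at this
  simpa only [he] using this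

lemma lintegral_ball_translate (F : ℂ → ℝ≥0∞) (c : ℂ) (R : ℝ) :
    ∫⁻ z in ball (0 : ℂ) R, F (c + z) = ∫⁻ z in ball c R, F z := by
  have := ((measurePreserving_add_left volume c).restrict_preimage_emb
    (MeasurableEquiv.addLeft c).measurableEmbedding (ball c R)).lintegral_comp_emb
      (MeasurableEquiv.addLeft c).measurableEmbedding F
  simpa using this

/-- Sub-mean value inequality for `|P|^p` on a disk: the circle inequality is applied to
`u ↦ P (c + u z)` and integrated over `z` in a disk about `0`, where Lebesgue measure is invariant
under `z ↦ u z` for `|u| = 1`. -/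
lemma submean (P : Polynomial ℂ) {p : ℝ} (hp : 0 < p) (c : ℂ) (R : ℝ) :
    ENNReal.ofReal (‖P.eval c‖ ^ p) * volume (ball c R) ≤
      ∫⁻ z in ball c R, ENNReal.ofReal (‖P.eval z‖ ^ p) := by
  set F : ℂ → ℝ≥0∞ := fun z => ENNReal.ofReal (‖P.eval z‖ ^ p) with hF
  have hFc : Continuous F := ENNReal.continuous_ofReal.comp
    (P.continuous.norm.rpow_const fun _ => Or.inr hp.le)
  have hpi : ENNReal.ofReal (2 * Real.pi) ≠ 0 := by
    simpa using Real.pi_pos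
  have h1 : ∀ z, F c * ENNReal.ofReal (2 * Real.pi) ≤
      ∫⁻ θ in Ioc (0 : ℝ) (2 * Real.pi), F (c + circleMap 0 1 θ * z) := by
    intro z
    have h := rpow_mul_le_lintegral_circle
      (P.comp (Polynomial.C c + Polynomial.X * Polynomial.C z)) hp
    simp only [Polynomial.eval_comp, Polynomial.eval_add, Polynomial.eval_mul, Polynomial.eval_C,
      Polynomial.eval_X, zero_mul, add_zero] at h
    exact h
  have h2 : ∫⁻ z in ball (0 : ℂ) R, ∫⁻ θ in Ioc (0 : ℝ) (2 * Real.pi), F (c + circleMap 0 1 θ * z)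
      = (∫⁻ z in ball c R, F z) * ENNReal.ofReal (2 * Real.pi) := by
    rw [lintegral_lintegral_swap]
    · simp_rw [lintegral_ball_rotate (fun z => F (c + z)) R, lintegral_ball_translate]
      simp
    · refine Continuous.aemeasurable (hFc.comp ?_)
      have := continuous_circleMap 0 1
      fun_prop
  have h3 : F c * volume (ball c R) * ENNReal.ofReal (2 * Real.pi) ≤
      (∫⁻ z in ball c R, F z) * ENNReal.ofReal (2 * Real.pi) := by
    rw [← h2]
    calc F c * volume (ball c R) * ENNReal.ofReal (2 * Real.pi)
        = ∫⁻ z in ball (0 : ℂ) R, F c * ENNReal.ofReal (2 * Real.pi) := by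
          simp only [lintegral_const, Measure.restrict_apply_univ, Complex.volume_ball]
          ring
      _ ≤ _ := lintegral_mono h1
  exact (ENNReal.mul_le_mul_iff_left hpi ENNReal.ofReal_ne_top).1 h3

/-! ### Local estimates -/

lemma one_sub_sq_pos {z : ℂ} (hz : z ∈ ball (0 : ℂ) 1) : 0 < 1 - ‖z‖ ^ 2 := by
  have : ‖z‖ < 1 := by simpa using hz
  nlinarith [norm_nonneg z]

/-- On the disk of centre `z` and radius at most `(1 - |z|)/2`, the quantity `1 - |w|²` is comparable
to `1 - |z|²`. -/
lemma weight_compare {ρ : ℝ} (hρ : ρ ≤ 1 / 2) {z w : ℂ} (hz : z ∈ ball (0 : ℂ) 1)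
    (hw : w ∈ ball z (ρ * (1 - ‖z‖))) :
    w ∈ ball (0 : ℂ) 1 ∧ 1 - ‖z‖ ^ 2 ≤ 4 * (1 - ‖w‖ ^ 2) ∧ 1 - ‖w‖ ^ 2 ≤ 4 * (1 - ‖z‖ ^ 2) := by
  have hz1 : ‖z‖ < 1 := by simpa using hz
  have hzw : ‖w - z‖ < ρ * (1 - ‖z‖) := by simpa [dist_eq_norm] using hw
  have h1 : ‖w‖ ≤ ‖z‖ + ‖w - z‖ := by simpa using norm_add_le z (w - z)
  have h2 : ‖z‖ ≤ ‖w‖ + ‖w - z‖ := by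
    rw [norm_sub_rev]; simpa using norm_add_le w (z - w)
  have h3 : ‖w - z‖ < 1 / 2 * (1 - ‖z‖) :=
    hzw.trans_le (mul_le_mul_of_nonneg_right hρ (by linarith))
  have hz0 := norm_nonneg z
  have hw0 := norm_nonneg w
  have hw1 : ‖w‖ < 1 := by linarith
  refine ⟨by simpa using hw1, ?_, ?_⟩
  · nlinarith
  · nlinarith

lemma rpow_compare {x y : ℝ} (hx : 0 < x) (hy : 0 < y) (hxy : x ≤ 4 * y) (hyx : y ≤ 4 * x)
    (s : ℝ) : x ^ s ≤ 4 ^ |s| * y ^ s := by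
  rcases le_total 0 s with hs | hs
  · rw [abs_of_nonneg hs, ← Real.mul_rpow (by norm_num) hy.le]
    exact Real.rpow_le_rpow hx.le hxy hs
  · rw [abs_of_nonpos hs, Real.rpow_neg (by norm_num), ← Real.inv_rpow (by norm_num),
      ← Real.mul_rpow (by norm_num) hy.le]
    exact Real.rpow_le_rpow_of_nonpos (by positivity) (by linarith) hs

/-- Disks of radius `R` have normalized area `R²`. -/
lemma inv_pi_mul_volume_ball (z : ℂ) {R : ℝ} :
    (ENNReal.ofReal Real.pi)⁻¹ * volume (ball z R) = ENNReal.ofReal R ^ 2 := by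
  have h : (NNReal.pi : ℝ≥0∞) = ENNReal.ofReal Real.pi := by
    rw [← NNReal.coe_real_pi, ENNReal.ofReal_coe_nnreal]
  rw [Complex.volume_ball, h, mul_comm, mul_assoc, ENNReal.mul_inv_cancel, mul_one]
  · simpa using Real.pi_pos
  · exact ENNReal.ofReal_ne_top

/-- Weighted sub-mean value inequality on the disk of radius `ρ (1 - |z|)`; the constant depends only
on `a` and `ρ`, not on the exponent `p`. -/
lemma local_bound {a ρ : ℝ} (ha : -1 < a) (hρ0 : 0 < ρ) (hρ : ρ ≤ 1 / 2) :
    ∃ K : ℝ, ∀ (P : Polynomial ℂ) (p : ℝ), 0 < p → ∀ z ∈ ball (0 : ℂ) 1,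
      ENNReal.ofReal (‖P.eval z‖ ^ p * (1 - ‖z‖ ^ 2) ^ (a + 2)) ≤
        ENNReal.ofReal K * ∫⁻ w in ball z (ρ * (1 - ‖z‖)),
          ENNReal.ofReal (‖P.eval w‖ ^ p * stdW a w) ∂dA := by
  have h4 : (0 : ℝ) < 4 ^ |a| := by positivity
  have ha1 : 0 < 1 + a := by linarith
  refine ⟨4 ^ |a| * 4 / ((1 + a) * ρ ^ 2), fun P p hp z hz => ?_⟩
  have hd := one_sub_sq_pos hz
  have hz1 : ‖z‖ < 1 := by simpa using hz
  set d := 1 - ‖z‖ ^ 2 with hd_def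
  set R := ρ * (1 - ‖z‖) with hR
  have hR0 : 0 ≤ R := mul_nonneg hρ0.le (by linarith)
  set k : ℝ := (1 + a) / 4 ^ |a| * d ^ a with hk
  have hk0 : 0 ≤ k := by positivity
  have hlow : ENNReal.ofReal k * (ENNReal.ofReal (‖P.eval z‖ ^ p) * ENNReal.ofReal R ^ 2) ≤
      ∫⁻ w in ball z R, ENNReal.ofReal (‖P.eval w‖ ^ p * stdW a w) ∂dA := by
    calc ENNReal.ofReal k * (ENNReal.ofReal (‖P.eval z‖ ^ p) * ENNReal.ofReal R ^ 2)
        = ENNReal.ofReal k * ((ENNReal.ofReal Real.pi)⁻¹ *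
            (ENNReal.ofReal (‖P.eval z‖ ^ p) * volume (ball z R))) := by
          rw [← inv_pi_mul_volume_ball z]; ring
      _ ≤ ENNReal.ofReal k * ((ENNReal.ofReal Real.pi)⁻¹ *
            ∫⁻ w in ball z R, ENNReal.ofReal (‖P.eval w‖ ^ p)) := by
          gcongr; exact submean P hp z R
      _ = ∫⁻ w in ball z R, ENNReal.ofReal k * ENNReal.ofReal (‖P.eval w‖ ^ p) ∂dA := by
          rw [lintegral_const_mul' _ _ ENNReal.ofReal_ne_top, dA, Measure.restrict_smul,
            lintegral_smul_measure, smul_eq_mul]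
      _ ≤ _ := by
          refine setLIntegral_mono' measurableSet_ball fun w hw => ?_
          obtain ⟨hw1, hc1, hc2⟩ := weight_compare hρ hz hw
          rw [← ENNReal.ofReal_mul hk0, mul_comm]
          refine ENNReal.ofReal_le_ofReal (mul_le_mul_of_nonneg_left ?_ (by positivity))
          have h := rpow_compare hd (one_sub_sq_pos hw1) hc1 hc2 a
          rw [hk, stdW, div_mul_eq_mul_div, div_le_iff₀ h4, mul_assoc]
          exact mul_le_mul_of_nonneg_left (by linarith) ha1.le
  refine le_trans ?_ (mul_le_mul_right hlow _)
  rw [← ENNReal.ofReal_pow hR0, ← ENNReal.ofReal_mul (by positivity), ← ENNReal.ofReal_mul hk0,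
    ← ENNReal.ofReal_mul (by positivity)]
  refine ENNReal.ofReal_le_ofReal ?_
  have hRd : ρ * d / 2 ≤ R := by
    rw [hR, hd_def]; nlinarith [mul_nonneg hρ0.le (sq_nonneg (1 - ‖z‖)), norm_nonneg z]
  have hRd2 : (ρ * d / 2) ^ 2 ≤ R ^ 2 := pow_le_pow_left₀ (by positivity) hRd 2
  have hsplit : d ^ (a + 2) = d ^ a * d ^ 2 := by
    rw [Real.rpow_add hd]; norm_num
  calc ‖P.eval z‖ ^ p * d ^ (a + 2)
      = 4 ^ |a| * 4 / ((1 + a) * ρ ^ 2) * (k * (‖P.eval z‖ ^ p * (ρ * d / 2) ^ 2)) := by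
        rw [hsplit, hk]; field_simp; ring
    _ ≤ _ := by gcongr

instance : SFinite dA := by unfold dA; infer_instance

/-! ### Integration against the Carleson measure -/

/-- Small Euclidean disks lie in pseudohyperbolic disks, with the roles of centre and point
interchangeable. -/
lemma mem_pD_of_mem_ball {r : ℝ} {z w : ℂ} (hz : z ∈ ball (0 : ℂ) 1)
    (hw : w ∈ ball (0 : ℂ) 1) (h : ‖w - z‖ < r * (1 - ‖z‖)) : z ∈ pD w r ∧ w ∈ pD z r := by
  have hz1 : ‖z‖ < 1 := by simpa using hz
  have hw1 : ‖w‖ < 1 := by simpa using hw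
  have hr : 0 < r := by
    by_contra hr
    nlinarith [norm_nonneg (w - z)]
  have key : ∀ u v : ℂ, ‖v‖ < 1 → ‖u‖ * ‖v‖ ≤ ‖z‖ → ‖u - v‖ = ‖w - z‖ →
      ‖(u - v) / (1 - (starRingEnd ℂ) u * v)‖ < r := by
    intro u v hv huv huv'
    have h1 : 1 - ‖z‖ ≤ ‖1 - (starRingEnd ℂ) u * v‖ := by
      have h := norm_sub_norm_le (1 : ℂ) ((starRingEnd ℂ) u * v)
      simp only [norm_one, norm_mul, RCLike.norm_conj] at h
      linarith
    have h2 : 0 < ‖1 - (starRingEnd ℂ) u * v‖ := by linarith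
    rw [norm_div, div_lt_iff₀ h2, huv']
    exact h.trans_le (mul_le_mul_of_nonneg_left h1 hr.le)
  refine ⟨⟨hz, key w z hz1 ?_ rfl⟩, ⟨hw, key z w hw1 ?_ (norm_sub_rev z w)⟩⟩
  · exact mul_le_of_le_one_left (norm_nonneg _) hw1.le
  · exact mul_le_of_le_one_right (norm_nonneg _) hw1.le

/-- The measure `μ` is finite on compact subsets of the unit disk, hence `σ`-finite there; this is
what Tonelli's theorem needs. -/
lemma sigmaFinite_restrict_disk {μ : Measure ℂ} {r : ℝ} (hr : 0 < r)
    (hμ : ∀ z ∈ ball (0 : ℂ) 1, μ (pD z r) < ⊤) : SigmaFinite (μ.restrict (ball (0 : ℂ) 1)) := by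
  have hfin : ∀ z ∈ ball (0 : ℂ) 1, μ.FiniteAtFilter (𝓝 z) := by
    intro z hz
    refine ⟨pD z r, ?_, hμ z hz⟩
    have hz1 : ‖z‖ < 1 := by simpa using hz
    filter_upwards [isOpen_ball.mem_nhds hz, ball_mem_nhds z (mul_pos hr (sub_pos.2 hz1))]
      with w hw hw'
    exact (mem_pD_of_mem_ball hz hw (by simpa [dist_eq_norm] using hw')).2
  have hlt : ∀ n : ℕ, 1 - 1 / ((n : ℝ) + 1) < 1 := fun n => by
    have : 0 < 1 / ((n : ℝ) + 1) := by positivity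
    linarith
  refine ⟨⟨⟨fun n => closedBall 0 (1 - 1 / ((n : ℝ) + 1)) ∪ (ball 0 1)ᶜ, fun _ => trivial,
    fun n => ?_, ?_⟩⟩⟩
  · refine (measure_union_le _ _).trans_lt (ENNReal.add_lt_top.2 ⟨?_, ?_⟩)
    · refine (Measure.restrict_apply_le _ _).trans_lt ?_
      refine (isCompact_closedBall _ _).measure_lt_top_of_nhdsWithin fun z hz => ?_
      exact (hfin z (closedBall_subset_ball (hlt n) hz)).filter_mono nhdsWithin_le_nhds
    · simp [Measure.restrict_apply measurableSet_ball.compl]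
  · refine eq_univ_of_forall fun z => mem_iUnion.2 ?_
    by_cases hz : ‖z‖ < 1
    · obtain ⟨n, hn⟩ := exists_nat_one_div_lt (sub_pos.2 hz)
      exact ⟨n, Or.inl (by simp only [mem_closedBall, dist_zero_right]; linarith)⟩
    · exact ⟨0, Or.inr (by simpa using hz)⟩

/-- Integrating local averages, weighted by `(1 - |z|²)^(-s)`, against a measure with
`μ(D(z,r)) ≤ C (1 - |z|²)^s` is controlled by area integration. -/
lemma carleson_fubini {μ : Measure ℂ} {r C s : ℝ} (hr : r ∈ Ioo (0 : ℝ) 1)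
    (hμ : ∀ z ∈ ball (0 : ℂ) 1, μ (pD z r) ≤ ENNReal.ofReal (C * (1 - ‖z‖ ^ 2) ^ s))
    {h : ℂ → ℝ≥0∞} (hh : Measurable h) :
    ∫⁻ z in ball (0 : ℂ) 1, ENNReal.ofReal ((1 - ‖z‖ ^ 2) ^ (-s)) *
        ∫⁻ w in ball z (r / 2 * (1 - ‖z‖)), h w ∂dA ∂μ ≤
      ENNReal.ofReal (4 ^ |s| * C) * ∫⁻ w in ball (0 : ℂ) 1, h w ∂dA := by
  obtain ⟨hr0, hr1⟩ := hr
  have hρ : r / 2 ≤ 1 / 2 := by linarith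
  have := sigmaFinite_restrict_disk hr0
    (fun z hz => (hμ z hz).trans_lt ENNReal.ofReal_lt_top)
  -- `(z, w) ∈ E` iff `w` lies in the disk averaged over at `z`.
  let E : Set (ℂ × ℂ) := {x | ‖x.2 - x.1‖ < r / 2 * (1 - ‖x.1‖)}
  have hE : MeasurableSet E :=
    (isOpen_lt (by fun_prop) (by fun_prop)).measurableSet
  let D : ℂ → ℝ≥0∞ := fun z => ENNReal.ofReal ((1 - ‖z‖ ^ 2) ^ (-s))
  have hD : Measurable D := by
    refine ENNReal.measurable_ofReal.comp (Measurable.pow_const ?_ _)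
    fun_prop
  let k : ℂ → ℂ → ℝ≥0∞ := fun z w => E.indicator (fun x => D x.1 * h x.2) (z, w)
  have hk : Measurable (Function.uncurry k) :=
    ((hD.comp measurable_fst).mul (hh.comp measurable_snd)).indicator hE
  have hleft : ∀ z ∈ ball (0 : ℂ) 1, D z * ∫⁻ w in ball z (r / 2 * (1 - ‖z‖)), h w ∂dA =
      ∫⁻ w in ball (0 : ℂ) 1, k z w ∂dA := by
    intro z hz
    have hsub : ball z (r / 2 * (1 - ‖z‖)) ⊆ ball (0 : ℂ) 1 :=
      fun w hw => (weight_compare hρ hz hw).1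
    have hkz : ∀ w, k z w = (ball z (r / 2 * (1 - ‖z‖))).indicator (fun w => D z * h w) w := by
      intro w
      simp only [k, E, indicator, mem_ofPred_eq, mem_ball, dist_eq_norm]
    simp_rw [hkz]
    rw [setLIntegral_indicator measurableSet_ball, inter_eq_left.2 hsub,
      lintegral_const_mul _ hh]
  rw [setLIntegral_congr_fun measurableSet_ball hleft,
    lintegral_lintegral_swap hk.aemeasurable, ← lintegral_const_mul _ hh]
  refine setLIntegral_mono' measurableSet_ball fun w hw => ?_
  have hdw := one_sub_sq_pos hw
  have hslice : MeasurableSet {z : ℂ | (z, w) ∈ E} := measurable_prodMk_right hE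
  calc ∫⁻ z in ball (0 : ℂ) 1, k z w ∂μ
      ≤ ∫⁻ z in ball (0 : ℂ) 1, {z : ℂ | (z, w) ∈ E}.indicator
          (fun _ => ENNReal.ofReal (4 ^ |s| * (1 - ‖w‖ ^ 2) ^ (-s)) * h w) z ∂μ := by
        refine setLIntegral_mono' measurableSet_ball fun z hz => ?_
        by_cases hzw : (z, w) ∈ E
        · rw [indicator_of_mem (s := {z : ℂ | (z, w) ∈ E}) hzw]
          simp only [k, indicator_of_mem hzw, D]
          obtain ⟨-, h1, h2⟩ := weight_compare hρ hz
            (show w ∈ ball z (r / 2 * (1 - ‖z‖)) by rw [mem_ball, dist_eq_norm]; exact hzw)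
          gcongr
          simpa using rpow_compare (one_sub_sq_pos hz) hdw h1 h2 (-s)
        · simp [k, indicator_of_notMem hzw]
    _ = ENNReal.ofReal (4 ^ |s| * (1 - ‖w‖ ^ 2) ^ (-s)) * h w *
          μ ({z : ℂ | (z, w) ∈ E} ∩ ball (0 : ℂ) 1) := by
        rw [lintegral_indicator_const hslice, Measure.restrict_apply hslice]
    _ ≤ ENNReal.ofReal (4 ^ |s| * (1 - ‖w‖ ^ 2) ^ (-s)) * h w *
          ENNReal.ofReal (C * (1 - ‖w‖ ^ 2) ^ s) := by
        gcongr
        refine le_trans (measure_mono ?_) (hμ w hw)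
        rintro z ⟨hzw, hz⟩
        have hz1 : ‖z‖ < 1 := by simpa using hz
        have hzw' : ‖w - z‖ < r / 2 * (1 - ‖z‖) := hzw
        exact (mem_pD_of_mem_ball hz hw (hzw'.trans_le (by nlinarith))).1
    _ = ENNReal.ofReal (4 ^ |s| * C) * h w := by
        rw [mul_right_comm, ← ENNReal.ofReal_mul (by positivity)]
        congr 2
        rw [Real.rpow_neg hdw.le]
        field_simp

/-! ### The bilinear estimate -/

/-- Growth estimate `|P(z)| (1 - |z|²)^((a+2)/p) ≤ K^(1/p) ‖P‖`, with `K` the constant of the weighted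
sub-mean value inequality. -/
lemma pointwise_bound {a ρ K p : ℝ}
    (hK : ∀ (P : Polynomial ℂ) (p : ℝ), 0 < p → ∀ z ∈ ball (0 : ℂ) 1,
      ENNReal.ofReal (‖P.eval z‖ ^ p * (1 - ‖z‖ ^ 2) ^ (a + 2)) ≤
        ENNReal.ofReal K * ∫⁻ w in ball z (ρ * (1 - ‖z‖)),
          ENNReal.ofReal (‖P.eval w‖ ^ p * stdW a w) ∂dA)
    (hρ : ρ ≤ 1 / 2) (hp : 0 < p) (P : Polynomial ℂ) {z : ℂ} (hz : z ∈ ball (0 : ℂ) 1) :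
    ENNReal.ofReal (‖P.eval z‖ * (1 - ‖z‖ ^ 2) ^ ((a + 2) / p)) ≤
      ENNReal.ofReal K ^ (1 / p) * wnorm p a (fun z => P.eval z) := by
  have hd := one_sub_sq_pos hz
  have hp' : 0 ≤ 1 / p := by positivity
  have h1 := (hK P p hp z hz).trans (mul_le_mul_right
    (lintegral_mono_set (fun w hw => (weight_compare hρ hz hw).1)) _)
  have h2 := ENNReal.rpow_le_rpow h1 hp'
  rw [ENNReal.mul_rpow_of_nonneg _ _ hp', ENNReal.ofReal_rpow_of_nonneg (by positivity) hp',
    Real.mul_rpow (by positivity) (by positivity), ← Real.rpow_mul (norm_nonneg _),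
    ← Real.rpow_mul hd.le, mul_one_div_cancel hp.ne', Real.rpow_one, mul_one_div] at h2
  exact h2

theorem stmt7 (p q q' a b : ℝ) (hp0 : 0 < p) (hp1 : p ≤ 1) (hq : 1 < q)
    (hq' : 1 / q + 1 / q' = 1) (hb : -1 < b) (hba : b ≤ a)
    (μ : Measure ℂ)
    (hμ : ∃ r ∈ Set.Ioo (0 : ℝ) 1, ∃ C : ℝ, ∀ z ∈ ball (0 : ℂ) 1,
      μ (pD z r) ≤
        ENNReal.ofReal
          (C * (1 - ‖z‖ ^ 2) ^ ((a + 2) * (1 / p + ((b + 2) / (a + 2)) / q')))) :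
    ∃ C : ℝ, ∀ P Q : Polynomial ℂ,
      (∫⁻ z in ball (0 : ℂ) 1, ENNReal.ofReal ‖P.eval z * Q.eval z‖ ∂μ) ≤
        ENNReal.ofReal C * wnorm p a (fun z => P.eval z) *
          wnorm q' b (fun z => Q.eval z) := by
  obtain ⟨r, hr, C, hC⟩ := hμ
  have hq0 : 0 < q := by linarith
  have hq'inv : 1 / q' = 1 - 1 / q := by linarith
  have hq'pos : 0 < q' := by
    have : 1 / q < 1 := (div_lt_one hq0).2 hq
    exact one_div_pos.1 (by rw [hq'inv]; linarith)
  have ha : -1 < a := by linarith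
  have ha2 : 0 < a + 2 := by linarith
  set s : ℝ := (a + 2) * (1 / p + ((b + 2) / (a + 2)) / q') with hs
  have hs' : s = (a + 2) / p + (b + 2) / q' := by
    rw [hs]; field_simp
  have hρ0 : 0 < r / 2 := by linarith [hr.1]
  have hρ : r / 2 ≤ 1 / 2 := by linarith [hr.2]
  obtain ⟨K, hK⟩ := local_bound ha hρ0 hρ
  obtain ⟨L, hL⟩ := local_bound hb hρ0 hρ
  set κ : ℝ≥0∞ := ENNReal.ofReal K
  set κ' : ℝ≥0∞ := ENNReal.ofReal L
  set M : ℝ≥0∞ := (κ ^ (1 / p)) ^ (1 - p) * κ' ^ (1 / q') * κ *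
    ENNReal.ofReal (4 ^ |s| * C) with hM
  have hp' : 0 ≤ 1 / p := by positivity
  have hMtop : M ≠ ⊤ := by
    have h1 : (κ ^ (1 / p)) ^ (1 - p) ≠ ⊤ :=
      ENNReal.rpow_ne_top_of_nonneg (by linarith)
        (ENNReal.rpow_ne_top_of_nonneg hp' ENNReal.ofReal_ne_top)
    have h2 : κ' ^ (1 / q') ≠ ⊤ :=
      ENNReal.rpow_ne_top_of_nonneg (by positivity) ENNReal.ofReal_ne_top
    exact ENNReal.mul_ne_top (ENNReal.mul_ne_top (ENNReal.mul_ne_top h1 h2) ENNReal.ofReal_ne_top)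
      ENNReal.ofReal_ne_top
  refine ⟨M.toReal, fun P Q => ?_⟩
  rw [ENNReal.ofReal_toReal hMtop]
  set X := wnorm p a (fun z => P.eval z) with hX
  set Y := wnorm q' b (fun z => Q.eval z) with hY
  have hu := fun z hz => pointwise_bound hK hρ hp0 P (z := z) hz
  have hv := fun z hz => pointwise_bound hL hρ hq'pos Q (z := z) hz
  set h : ℂ → ℝ≥0∞ := fun w => ENNReal.ofReal (‖P.eval w‖ ^ p * stdW a w) with hh
  have hhm : Measurable h := by
    refine ENNReal.measurable_ofReal.comp (Measurable.mul ?_ ?_)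
    · exact (P.continuous.norm.measurable).pow_const _
    · refine Measurable.const_mul (Measurable.pow_const ?_ _) _
      fun_prop
  have hpt : ∀ z ∈ ball (0 : ℂ) 1, ENNReal.ofReal ‖P.eval z * Q.eval z‖ ≤
      ((κ ^ (1 / p)) ^ (1 - p) * κ' ^ (1 / q') * κ * (X ^ (1 - p) * Y)) *
        (ENNReal.ofReal ((1 - ‖z‖ ^ 2) ^ (-s)) *
          ∫⁻ w in ball z (r / 2 * (1 - ‖z‖)), h w ∂dA) := by
    intro z hz
    have hd := one_sub_sq_pos hz
    set d := 1 - ‖z‖ ^ 2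
    have e1 : ENNReal.ofReal ‖P.eval z * Q.eval z‖ = ENNReal.ofReal (d ^ (-s)) *
        (ENNReal.ofReal (‖P.eval z‖ * d ^ ((a + 2) / p)) *
          ENNReal.ofReal (‖Q.eval z‖ * d ^ ((b + 2) / q'))) := by
      rw [← ENNReal.ofReal_mul (by positivity), ← ENNReal.ofReal_mul (by positivity), norm_mul]
      congr 1
      rw [Real.rpow_neg hd.le, hs', Real.rpow_add hd]
      field_simp
    set u := ENNReal.ofReal (‖P.eval z‖ * d ^ ((a + 2) / p)) with hu_def
    -- The exponent `1 - p` is nonnegative: this is where `p ≤ 1` enters.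
    have e2 : u = u ^ (1 - p) * u ^ p := by
      rw [← ENNReal.rpow_add_of_nonneg _ _ (by linarith) hp0.le, sub_add_cancel, ENNReal.rpow_one]
    have e3 : u ^ p ≤ κ * ∫⁻ w in ball z (r / 2 * (1 - ‖z‖)), h w ∂dA := by
      refine le_trans (le_of_eq ?_) (hK P p hp0 z hz)
      rw [hu_def, ENNReal.ofReal_rpow_of_nonneg (by positivity) hp0.le,
        Real.mul_rpow (norm_nonneg _) (by positivity), ← Real.rpow_mul hd.le,
        div_mul_cancel₀ _ hp0.ne']
    have e4 : u ^ (1 - p) ≤ (κ ^ (1 / p) * X) ^ (1 - p) :=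
      ENNReal.rpow_le_rpow (hu z hz) (by linarith)
    rw [ENNReal.mul_rpow_of_nonneg _ _ (by linarith)] at e4
    rw [e1]
    calc ENNReal.ofReal (d ^ (-s)) * (u * ENNReal.ofReal (‖Q.eval z‖ * d ^ ((b + 2) / q')))
        ≤ ENNReal.ofReal (d ^ (-s)) * ((((κ ^ (1 / p)) ^ (1 - p) * X ^ (1 - p)) *
            (κ * ∫⁻ w in ball z (r / 2 * (1 - ‖z‖)), h w ∂dA)) * (κ' ^ (1 / q') * Y)) := by
          rw [e2]
          gcongr
          exact hv z hz
      _ = _ := by ring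
  have hXp : ∫⁻ w in ball (0 : ℂ) 1, h w ∂dA = X ^ p := by
    rw [hX, wnorm, ← ENNReal.rpow_mul, one_div_mul_cancel hp0.ne', ENNReal.rpow_one]
  set c : ℝ≥0∞ := (κ ^ (1 / p)) ^ (1 - p) * κ' ^ (1 / q') * κ * (X ^ (1 - p) * Y) with hc
  calc ∫⁻ z in ball (0 : ℂ) 1, ENNReal.ofReal ‖P.eval z * Q.eval z‖ ∂μ
      ≤ ∫⁻ z in ball (0 : ℂ) 1, ENNReal.ofReal ((1 - ‖z‖ ^ 2) ^ (-s)) *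
          ∫⁻ w in ball z (r / 2 * (1 - ‖z‖)), c * h w ∂dA ∂μ := by
        -- The constant `c`, which may be infinite, is absorbed into the inner integrand.
        refine setLIntegral_mono' measurableSet_ball fun z hz => (hpt z hz).trans_eq ?_
        rw [lintegral_const_mul _ hhm]
        ring
    _ ≤ ENNReal.ofReal (4 ^ |s| * C) * ∫⁻ w in ball (0 : ℂ) 1, c * h w ∂dA :=
        carleson_fubini hr hC (hhm.const_mul c)
    _ = M * (X ^ (1 - p) * X ^ p) * Y := by
        rw [lintegral_const_mul _ hhm, hXp, hc, hM]
        ring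
    _ = M * X * Y := by
        rw [← ENNReal.rpow_add_of_nonneg _ _ (by linarith) hp0.le, sub_add_cancel,
          ENNReal.rpow_one]
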